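/- arXiv:2402.01006 — 2 statements merged into one kernel-verified Lean document; each statement's English description precedes it below -/
import Mathlib

section
/- h(n, 2K₂) = n for all n ≥ 7. -/
open SimpleGraph

variable {V W : Type*}

/-- Two `Sym2` elements (edges) are vertex-disjoint. -/
def sym2Disjoint (e e' : Sym2 V) : Prop := ∀ v, v ∈ e → v ∉ e'

/-- Edge set of the copy of `G` in `H` given by an (injective) homomorphism. -/
def copyEdges (G : SimpleGraph V) (H : SimpleGraph W) (φ : G →g H) : Set (Sym2 W) :=
  Sym2.map φ '' G.edgeSet

/-- The edge set `E` is `f`-free. -/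
def IsFreeSet (f : Sym2 W → Sym2 W) (E : Set (Sym2 W)) : Prop := ∀ e ∈ E, f e ∉ E

/-- `f` is an edge mapping of `H` with `f e ≠ e` (equivalently `|f e ∩ e| ≤ 1`). -/
def IsEdgeMap (H : SimpleGraph W) (f : Sym2 W → Sym2 W) : Prop :=
  ∀ e ∈ H.edgeSet, f e ∈ H.edgeSet ∧ f e ≠ e

/-- `f` is an edge mapping of `H` with `f e ∩ e = ∅`. -/
def IsDisjEdgeMap (H : SimpleGraph W) (f : Sym2 W → Sym2 W) : Prop :=
  ∀ e ∈ H.edgeSet, f e ∈ H.edgeSet ∧ sym2Disjoint e (f e)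

/-- `H` contains a copy of `G` (as a not necessarily induced subgraph). -/
def Contains (G : SimpleGraph V) (H : SimpleGraph W) : Prop :=
  ∃ φ : G →g H, Function.Injective φ

/-- `H` has no `f`-free copy of `G`. -/
def NoFreeCopy (G : SimpleGraph V) (H : SimpleGraph W) (f : Sym2 W → Sym2 W) : Prop :=
  ∀ φ : G →g H, Function.Injective φ → ¬ IsFreeSet f (copyEdges G H φ)

/-- The Turán number `ex(n, G)`. -/
noncomputable def exNum (n : ℕ) (G : SimpleGraph V) : ℕ :=
  sSup {m | ∃ H : SimpleGraph (Fin n), H.edgeSet.ncard = m ∧ ¬ Contains G H}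

/-- The parameter `h(n, G)`. -/
noncomputable def hNum (n : ℕ) (G : SimpleGraph V) : ℕ :=
  sSup {m | ∃ (H : SimpleGraph (Fin n)) (f : Sym2 (Fin n) → Sym2 (Fin n)),
    H.edgeSet.ncard = m ∧ IsEdgeMap H f ∧ NoFreeCopy G H f}

/-- Independence number. -/
noncomputable def indepNum (G : SimpleGraph V) [Fintype V] : ℕ :=
  sSup {m | ∃ s : Finset V, (∀ v ∈ s, ∀ w ∈ s, ¬ G.Adj v w) ∧ s.card = m}

/-- The matching `tK₂` on `Fin (2t)`: vertices `2i, 2i+1` are matched. -/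
def matching (t : ℕ) : SimpleGraph (Fin (2*t)) :=
  SimpleGraph.fromRel (fun v w => (v : ℕ) / 2 = (w : ℕ) / 2)

/-- The star `K_{1,r}` on `Fin (r+1)`, with center `0`. -/
def starG (r : ℕ) : SimpleGraph (Fin (r+1)) :=
  SimpleGraph.fromRel (fun v _ => v = 0)

lemma mem_copyEdges_matching {W : Type*} {H : SimpleGraph W} (φ : matching 2 →g H) (e : Sym2 W) :
    e ∈ copyEdges (matching 2) H φ ↔ e = s(φ 0, φ 1) ∨ e = s(φ 2, φ 3) := by
  constructor
  · rintro ⟨p, hp, rfl⟩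
    induction p with | _ a b
    change (matching 2).Adj a b at hp
    simp only [matching, fromRel_adj] at hp
    fin_cases a <;> fin_cases b <;> simp_all [Sym2.eq_swap]
  · rintro (rfl | rfl)
    · exact ⟨s(0, 1), by simp [matching], by simp⟩
    · exact ⟨s(2, 3), by simp [matching], by simp⟩

lemma NoFreeCopy.eq_or_eq {W : Type*} {H : SimpleGraph W} {f : Sym2 W → Sym2 W}
    (hf : IsEdgeMap H f) (h : NoFreeCopy (matching 2) H f) {e e' : Sym2 W}
    (he : e ∈ H.edgeSet) (he' : e' ∈ H.edgeSet) (hd : sym2Disjoint e e') :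
    f e = e' ∨ f e' = e := by
  have hfe := (hf e he).2
  have hfe' := (hf e' he').2
  induction e with | _ a b
  induction e' with | _ c d
  have hab : H.Adj a b := he
  have hcd : H.Adj c d := he'
  have := hab.ne
  have := hcd.ne
  have h1 := hd a (by simp)
  have h2 := hd b (by simp)
  simp only [Sym2.mem_iff, not_or] at h1 h2
  let φ : matching 2 →g H :=
    { toFun := ![a, b, c, d]
      map_rel' := by
        intro x y hxy
        simp only [matching, fromRel_adj] at hxy
        fin_cases x <;> fin_cases y <;> simp_all [H.adj_comm] }
  have hφ : Function.Injective φ := by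
    intro x y hxy
    change ![a, b, c, d] x = ![a, b, c, d] y at hxy
    fin_cases x <;> fin_cases y <;> simp_all
  have hfree := h φ hφ
  unfold IsFreeSet at hfree
  push Not at hfree
  obtain ⟨g, hg, hfg⟩ := hfree
  rw [mem_copyEdges_matching] at hg hfg
  change g = s(a, b) ∨ g = s(c, d) at hg
  change f g = s(a, b) ∨ f g = s(c, d) at hfg
  rcases hg with rfl | rfl <;> tauto

lemma noFreeCopy_matching_two {W : Type*} {H : SimpleGraph W} {f : Sym2 W → Sym2 W}
    (h : ∀ e ∈ H.edgeSet, ∀ e' ∈ H.edgeSet, sym2Disjoint e e' → f e = e' ∨ f e' = e) :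
    NoFreeCopy (matching 2) H f := by
  intro φ hφ hfree
  have h01 : s(φ 0, φ 1) ∈ H.edgeSet := φ.map_adj (by simp [matching])
  have h23 : s(φ 2, φ 3) ∈ H.edgeSet := φ.map_adj (by simp [matching])
  have hd : sym2Disjoint s(φ 0, φ 1) s(φ 2, φ 3) := by
    intro v hv hv'
    simp only [Sym2.mem_iff] at hv hv'
    rcases hv with rfl | rfl <;> rcases hv' with h | h <;> exact absurd (hφ h) (by decide)
  have m01 : s(φ 0, φ 1) ∈ copyEdges (matching 2) H φ :=
    (mem_copyEdges_matching φ _).2 (Or.inl rfl)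
  have m23 : s(φ 2, φ 3) ∈ copyEdges (matching 2) H φ :=
    (mem_copyEdges_matching φ _).2 (Or.inr rfl)
  rcases h _ h01 _ h23 hd with h | h
  · exact hfree _ m01 (h ▸ m23)
  · exact hfree _ m23 (h ▸ m01)

/-- The witness is a star with one extra edge. -/
lemma exists_noFreeCopy_matching_two (n : ℕ) (hn : 3 ≤ n) :
    ∃ (H : SimpleGraph (Fin n)) (f : Sym2 (Fin n) → Sym2 (Fin n)),
      H.edgeSet.ncard = n ∧ IsEdgeMap H f ∧ NoFreeCopy (matching 2) H f := by
  classical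
  obtain ⟨n, rfl⟩ : ∃ k, n = k + 3 := ⟨n - 3, by omega⟩
  have h01 : (0 : Fin (n + 3)) ≠ 1 := by simp
  have h02 : (0 : Fin (n + 3)) ≠ 2 := by
    have : 2 % (n + 3) = 2 := Nat.mod_eq_of_lt (by omega)
    simp [Fin.ext_iff, this]
  have h12 : (1 : Fin (n + 3)) ≠ 2 := by
    have : 2 % (n + 3) = 2 := Nat.mod_eq_of_lt (by omega)
    simp [Fin.ext_iff, this]
  set S : Finset (Sym2 (Fin (n + 3))) :=
    insert s(1, 2) ((Finset.univ.erase 0).image fun v => s(0, v)) with hS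
  have hmem : ∀ e, e ∈ S ↔ e = s(1, 2) ∨ ∃ v, v ≠ 0 ∧ s(0, v) = e := by simp [hS]
  have hedge : (fromEdgeSet (S : Set (Sym2 (Fin (n + 3))))).edgeSet = S := by
    rw [edgeSet_fromEdgeSet, sdiff_eq_left, Set.disjoint_left]
    intro e he
    rw [Finset.mem_coe, hmem] at he
    rcases he with rfl | ⟨v, hv, rfl⟩
    · simpa using h12
    · simpa using hv.symm
  have hcard : S.card = n + 3 := by
    rw [hS, Finset.card_insert_of_notMem, Finset.card_image_of_injective]
    · simp
    · intro a b hab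
      exact Sym2.congr_right.1 hab
    · simp only [Finset.mem_image, not_exists, not_and]
      intro v _ h
      have : (0 : Fin (n + 3)) ∈ s(1, 2) := h ▸ Sym2.mem_mk_left 0 v
      simp [h01, h02] at this
  refine ⟨fromEdgeSet S, fun e => if e = s(1, 2) then s(0, 1) else s(1, 2), ?_, ?_, ?_⟩
  · rw [hedge, Set.ncard_coe_finset, hcard]
  · intro e he
    rw [hedge, Finset.mem_coe] at he ⊢
    dsimp only
    split_ifs with h
    · subst h
      exact ⟨(hmem _).2 (Or.inr ⟨1, h01.symm, rfl⟩), by simp [h01, h02]⟩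
    · exact ⟨(hmem _).2 (Or.inl rfl), fun h' => h h'.symm⟩
  · apply noFreeCopy_matching_two
    rw [hedge]
    intro e he e' he' hd
    rw [Finset.mem_coe, hmem] at he he'
    by_cases h : e = s(1, 2)
    · by_cases h' : e' = s(1, 2)
      · subst h h'
        exact absurd (Sym2.mem_mk_left 1 2) (hd 1 (Sym2.mem_mk_left 1 2))
      · exact Or.inr (by simp [h, h'])
    · by_cases h' : e' = s(1, 2)
      · exact Or.inl (by simp [h, h'])
      · obtain ⟨v, -, rfl⟩ := he.resolve_left h
        obtain ⟨w, -, rfl⟩ := he'.resolve_left h'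
        exact absurd (Sym2.mem_mk_left 0 w) (hd 0 (Sym2.mem_mk_left 0 v))

lemma sum_card_le_card_add_card {α : Type*} [DecidableEq α] {f : α → α} {A A' B : Finset α}
    {g : α → Finset α}
    (h : ∀ e ∈ A, ∀ x ∈ g e, (e ∈ A' ∧ f e = x) ∨ (x ∈ B ∧ f x = e)) :
    ∑ e ∈ A, (g e).card ≤ A'.card + B.card := by
  rw [← Finset.card_sigma]
  calc (A.sigma g).card
      ≤ (A'.image (fun e => (⟨e, f e⟩ : Σ _ : α, α)) ∪ B.image (fun x => ⟨f x, x⟩)).card := by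
        apply Finset.card_le_card
        rintro ⟨e, x⟩ hex
        rw [Finset.mem_sigma] at hex
        rw [Finset.mem_union, Finset.mem_image, Finset.mem_image]
        rcases h e hex.1 x hex.2 with ⟨h1, rfl⟩ | ⟨h1, rfl⟩
        · exact Or.inl ⟨e, h1, rfl⟩
        · exact Or.inr ⟨x, h1, rfl⟩
    _ ≤ _ := (Finset.card_union_le _ _).trans (add_le_add Finset.card_image_le Finset.card_image_le)

/-- Among edges through `c`, at most `|W|` meet a vertex set `W` avoiding `c`. -/
lemma card_filter_meet_le [DecidableEq V] {T : Finset (Sym2 V)} {c : V} (hT : ∀ e ∈ T, c ∈ e)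
    {W : Finset V} (hc : c ∉ W) :
    (T.filter fun e => ∃ v ∈ W, v ∈ e).card ≤ (W.filter fun v => s(c, v) ∈ T).card := by
  refine le_trans (Finset.card_le_card ?_)
    (Finset.card_image_le (f := fun v => s(c, v)))
  intro e he
  rw [Finset.mem_filter] at he
  obtain ⟨heT, v, hv, hve⟩ := he
  have : e = s(c, v) :=
    ((Sym2.mem_and_mem_iff (ne_of_mem_of_not_mem hv hc).symm).1 ⟨hT e heT, hve⟩)
  subst this
  exact Finset.mem_image.2 ⟨v, Finset.mem_filter.2 ⟨hv, heT⟩, rfl⟩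

lemma not_sym2Disjoint_iff {e e' : Sym2 V} : ¬ sym2Disjoint e e' ↔ ∃ v, v ∈ e ∧ v ∈ e' := by
  simp [sym2Disjoint]

lemma exists_mem_of_pairwise_meet [DecidableEq V] {F : Finset (Sym2 V)} (hF : F.card = 4)
    (hdiag : ∀ e ∈ F, ¬ e.IsDiag)
    (h : ∀ e ∈ F, ∀ e' ∈ F, ¬ sym2Disjoint e e') : ∃ v, ∀ e ∈ F, v ∈ e := by
  obtain ⟨e1, e2, e3, e4, h12, h13, h14, h23, h24, h34, rfl⟩ := Finset.card_eq_four.1 hF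
  simp only [Finset.mem_insert, Finset.mem_singleton, forall_eq_or_imp, forall_eq,
    not_sym2Disjoint_iff] at hdiag h ⊢
  obtain ⟨⟨-, ⟨x, hx1, hx2⟩, h13', h14'⟩, ⟨-, -, h23', h24'⟩, ⟨-, -, -, h34'⟩, -⟩ := h
  obtain ⟨y, rfl⟩ := hx1
  obtain ⟨z, rfl⟩ := hx2
  induction e3 with | _ a b
  induction e4 with | _ c d
  simp only [Sym2.mem_iff, Sym2.mk_isDiag_iff] at *
  by_cases h3 : x = a ∨ x = b
  · by_cases h4 : x = c ∨ x = d
    · exact ⟨x, by simp [h3, h4]⟩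
    · grind
  · grind

lemma card_le_of_forall_disjoint_eq_or_eq [Fintype V] [DecidableEq V] (hV : 7 ≤ Fintype.card V)
    {E : Finset (Sym2 V)} {f : Sym2 V → Sym2 V} (hdiag : ∀ e ∈ E, ¬ e.IsDiag)
    (h : ∀ e ∈ E, ∀ e' ∈ E, sym2Disjoint e e' → f e = e' ∨ f e' = e) :
    E.card ≤ Fintype.card V := by
  classical
  by_contra! hE
  let T : V → Finset (Sym2 V) := fun c => E.filter (c ∈ ·)
  have hTlt : ∀ c, (T c).card + 1 ≤ Fintype.card V := by
    intro c
    have : T c ⊆ (Finset.univ.erase c).image fun v => s(c, v) := by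
      intro e he
      obtain ⟨heE, v, rfl⟩ := Finset.mem_filter.1 he
      have := hdiag _ heE
      rw [Sym2.mk_isDiag_iff] at this
      exact Finset.mem_image.2 ⟨v, by simpa using Ne.symm this, rfl⟩
    have := (Finset.card_le_card this).trans Finset.card_image_le
    rw [Finset.card_erase_of_mem (Finset.mem_univ c), Finset.card_univ] at this
    omega
  have : Nonempty V := Fintype.card_pos_iff.1 (by omega)
  obtain ⟨c, hc⟩ := Finite.exists_max fun c => (T c).card
  rcases Nat.lt_or_ge (T c).card 4 with hsmall | hlarge
  · have hdeg : ∀ e ∈ E, 3 ≤ (E.filter (sym2Disjoint e)).card := by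
      intro e he
      have hsplit := Finset.card_filter_add_card_filter_not (s := E) (sym2Disjoint e)
      induction e with | _ x y
      have hsub : E.filter (fun e' => ¬ sym2Disjoint s(x, y) e') ⊆ T x ∪ T y := by
        intro e' he'
        rw [Finset.mem_filter, not_sym2Disjoint_iff] at he'
        obtain ⟨he', v, hv, hv'⟩ := he'
        rcases Sym2.mem_iff.1 hv with rfl | rfl
        · exact Finset.mem_union_left _ (Finset.mem_filter.2 ⟨he', hv'⟩)
        · exact Finset.mem_union_right _ (Finset.mem_filter.2 ⟨he', hv'⟩)
      have hle := Finset.card_le_card hsub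
      have hinter : 0 < (T x ∩ T y).card :=
        Finset.card_pos.2 ⟨s(x, y), by simp [T, he]⟩
      have hui := Finset.card_union_add_card_inter (T x) (T y)
      have hx := hc x
      have hy := hc y
      omega
    have hle : ∑ e ∈ E, (E.filter (sym2Disjoint e)).card ≤ E.card + E.card := by
      apply sum_card_le_card_add_card (f := f)
      intro e he x hx
      rw [Finset.mem_filter] at hx
      rcases h e he x hx.1 hx.2 with h' | h'
      · exact Or.inl ⟨he, h'⟩
      · exact Or.inr ⟨hx.1, h'⟩
    have := Finset.card_nsmul_le_sum E _ 3 hdeg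
    rw [smul_eq_mul] at this
    omega
  · set F := E.filter (c ∉ ·)
    have hFT : (T c).card + F.card = E.card := Finset.card_filter_add_card_filter_not _
    have hFE : ∀ e ∈ F, e ∈ E := fun e he => (Finset.mem_filter.1 he).1
    have hTE : ∀ e ∈ T c, e ∈ E := fun e he => (Finset.mem_filter.1 he).1
    have hcF : ∀ e ∈ F, c ∉ e := fun e he => (Finset.mem_filter.1 he).2
    have hcT : ∀ e ∈ T c, c ∈ e := fun e he => (Finset.mem_filter.1 he).2
    have hdisj : ∀ e ∈ F,
        (T c).card ≤ ((T c).filter (sym2Disjoint e)).card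
          + (e.toFinset.filter fun v => s(c, v) ∈ T c).card := by
      intro e he
      have hm := card_filter_meet_le hcT (W := e.toFinset) (by simpa using hcF e he)
      have hsplit := Finset.card_filter_add_card_filter_not (s := T c) (sym2Disjoint e)
      simp only [not_sym2Disjoint_iff, Sym2.mem_toFinset] at hm hsplit
      omega
    have htwo : ∀ e : Sym2 V, e.toFinset.card ≤ 2 := by
      intro e
      rw [Sym2.card_toFinset]
      split_ifs <;> omega
    have hdisj' : ∀ e ∈ F, (T c).card - 2 ≤ ((T c).filter (sym2Disjoint e)).card := by
      intro e he
      have h1 := hdisj e he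
      have h2 := (Finset.card_filter_le e.toFinset fun v => s(c, v) ∈ T c).trans (htwo e)
      omega
    have hlow := Finset.card_nsmul_le_sum F _ _ hdisj'
    rw [smul_eq_mul] at hlow
    have hup : ∑ e ∈ F, ((T c).filter (sym2Disjoint e)).card ≤ F.card + (T c).card := by
      apply sum_card_le_card_add_card (f := f)
      intro e he x hx
      rw [Finset.mem_filter] at hx
      rcases h e (hFE e he) x (hTE x hx.1) hx.2 with h' | h'
      · exact Or.inl ⟨he, h'⟩
      · exact Or.inr ⟨hx.1, h'⟩
    have hclt := hTlt c
    have hcases : ((T c).card = 4 ∧ F.card = 4) ∨ ((T c).card = 6 ∧ F.card = 2) := by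
      have hle := hlow.trans hup
      have hF2 : 2 ≤ F.card := by omega
      have h8 : 8 ≤ F.card + (T c).card := by omega
      generalize F.card = a at *
      generalize (T c).card = t at *
      obtain ⟨t, rfl⟩ : ∃ k, t = k + 4 := ⟨t - 4, by omega⟩
      obtain ⟨a, rfl⟩ : ∃ k, a = k + 2 := ⟨a - 2, by omega⟩
      rw [show t + 4 - 2 = t + 2 by omega] at hle
      have ht : t ≤ 2 := by nlinarith
      interval_cases t <;> omega
    have hmap : ∀ e ∈ F, f e ∉ F := by
      intro e₀ he₀ hfe₀
      have hup' : ∑ e ∈ F, ((T c).filter (sym2Disjoint e)).card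
          ≤ (F.erase e₀).card + (T c).card := by
        apply sum_card_le_card_add_card (f := f)
        intro e he x hx
        rw [Finset.mem_filter] at hx
        rcases h e (hFE e he) x (hTE x hx.1) hx.2 with h' | h'
        · refine Or.inl ⟨Finset.mem_erase.2 ⟨?_, he⟩, h'⟩
          rintro rfl
          exact hcF _ hfe₀ (h' ▸ hcT x hx.1)
        · exact Or.inr ⟨hx.1, h'⟩
      rw [Finset.card_erase_of_mem he₀] at hup'
      have hle := hlow.trans hup'
      rcases hcases with ⟨h1, h2⟩ | ⟨h1, h2⟩ <;> rw [h1, h2] at hle <;> omega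
    have hmeet : ∀ e ∈ F, ∀ e' ∈ F, ¬ sym2Disjoint e e' := by
      intro e he e' he' hd
      rcases h e (hFE e he) e' (hFE e' he') hd with h' | h'
      · exact hmap e he (h' ▸ he')
      · exact hmap e' he' (h' ▸ he)
    rcases hcases with ⟨hT4, hF4⟩ | ⟨hT6, hF2⟩
    · obtain ⟨v, hv⟩ := exists_mem_of_pairwise_meet hF4 (fun e he => hdiag e (hFE e he)) hmeet
      by_cases hcv : s(c, v) ∈ T c
      · have hsub : insert s(c, v) F ⊆ T v := by
          intro e he
          rcases Finset.mem_insert.1 he with rfl | he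
          · exact Finset.mem_filter.2 ⟨hTE _ hcv, Sym2.mem_mk_right c v⟩
          · exact Finset.mem_filter.2 ⟨hFE e he, hv e he⟩
        have hle := Finset.card_le_card hsub
        rw [Finset.card_insert_of_notMem fun hF => hcF _ hF (Sym2.mem_mk_left c v)] at hle
        have := hc v
        omega
      · have h3 : ∀ e ∈ F, 3 ≤ ((T c).filter (sym2Disjoint e)).card := by
          intro e he
          have h1 := hdisj e he
          have h2 : (e.toFinset.filter fun w => s(c, w) ∈ T c).card < e.toFinset.card :=
            Finset.card_lt_card
              (Finset.filter_ssubset.2 ⟨v, Sym2.mem_toFinset.2 (hv e he), hcv⟩)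
          have h3 := htwo e
          omega
        have := Finset.card_nsmul_le_sum F _ 3 h3
        rw [smul_eq_mul] at this
        omega
    · obtain ⟨e₁, e₂, -, hF⟩ := Finset.card_eq_two.1 hF2
      have he₁ : e₁ ∈ F := by simp [hF]
      have he₂ : e₂ ∈ F := by simp [hF]
      obtain ⟨v, hv₁, hv₂⟩ := not_sym2Disjoint_iff.1 (hmeet e₁ he₁ e₂ he₂)
      set W := e₁.toFinset ∪ e₂.toFinset with hW
      have hWcard : W.card ≤ 3 := by
        have h1 := Finset.card_union_add_card_inter e₁.toFinset e₂.toFinset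
        rw [← hW] at h1
        have h2 : 0 < (e₁.toFinset ∩ e₂.toFinset).card :=
          Finset.card_pos.2 ⟨v, by simp [hv₁, hv₂]⟩
        have h3 := htwo e₁
        have h4 := htwo e₂
        omega
      have hcW : c ∉ W := by simp [hW, hcF e₁ he₁, hcF e₂ he₂]
      have hm := (card_filter_meet_le hcT hcW).trans (Finset.card_filter_le _ _)
      have hsplit := Finset.card_filter_add_card_filter_not (s := T c) (fun e => ∃ v ∈ W, v ∈ e)
      set T' := (T c).filter (fun e => ¬ ∃ v ∈ W, v ∈ e)
      have hup' : ∑ e ∈ F, T'.card ≤ F.card + T'.card := by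
        apply sum_card_le_card_add_card (f := f) (g := fun _ => T')
        intro e he x hx
        have hx' := Finset.mem_filter.1 hx
        have hd : sym2Disjoint e x := by
          intro w hw hwx
          refine hx'.2 ⟨w, ?_, hwx⟩
          rw [hF, Finset.mem_insert, Finset.mem_singleton] at he
          rcases he with rfl | rfl <;> simp [hW, hw]
        rcases h e (hFE e he) x (hTE x hx'.1) hd with h' | h'
        · exact Or.inl ⟨he, h'⟩
        · exact Or.inr ⟨hx, h'⟩
      rw [Finset.sum_const, smul_eq_mul, hF2] at hup'
      omega

/-- h(n, 2K₂) = n for all n ≥ 7. -/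
theorem stmt7 (n : ℕ) (hn : 7 ≤ n) : hNum n (matching 2) = n := by
  refine IsGreatest.csSup_eq ⟨exists_noFreeCopy_matching_two n (by omega), ?_⟩
  classical
  rintro m ⟨H, f, rfl, hf, hfree⟩
  rw [← coe_edgeFinset, Set.ncard_coe_finset]
  have := card_le_of_forall_disjoint_eq_or_eq (E := H.edgeFinset) (f := f) (by simpa using hn)
    (fun e he => H.not_isDiag_of_mem_edgeSet (mem_edgeFinset.1 he))
    (fun e he e' he' hd => hfree.eq_or_eq hf (mem_edgeFinset.1 he) (mem_edgeFinset.1 he') hd)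
  simpa using this
end

section
/- h(4, 2K₂) = 6, h(5, 2K₂) = 7, and h(6, 2K₂) = 7. -/
open SimpleGraph

variable {V W : Type*}

theorem isFreeSet_pair_iff {f : Sym2 W → Sym2 W} {e e' : Sym2 W} :
    IsFreeSet f {e, e'} ↔ (f e ≠ e ∧ f e ≠ e') ∧ f e' ≠ e ∧ f e' ≠ e' := by
  simp [IsFreeSet]

theorem matching_two_edgeSet : (matching 2).edgeSet = {s(0, 1), s(2, 3)} := by
  have adj_iff : ∀ a b, (matching 2).Adj a b ↔ s(a, b) = s(0, 1) ∨ s(a, b) = s(2, 3) := by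
    simp only [matching, SimpleGraph.fromRel_adj]
    decide
  ext e
  induction e with
  | h a b => simpa using adj_iff a b

theorem copyEdges_matching_two (H : SimpleGraph W) (φ : matching 2 →g H) :
    copyEdges (matching 2) H φ = {s(φ 0, φ 1), s(φ 2, φ 3)} := by
  rw [copyEdges, matching_two_edgeSet, Set.image_pair, Sym2.map_mk, Sym2.map_mk]

/-- For an edge mapping `f`, having no `f`-free copy of `2K₂` means that one edge of every disjoint
pair is mapped to the other. -/
theorem noFreeCopy_matching_two_iff {H : SimpleGraph W} {f : Sym2 W → Sym2 W}
    (hf : IsEdgeMap H f) :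
    NoFreeCopy (matching 2) H f ↔
      ∀ e ∈ H.edgeSet, ∀ e' ∈ H.edgeSet, sym2Disjoint e e' → f e = e' ∨ f e' = e := by
  constructor
  · intro h e he e' he' hd
    induction e with
    | h a b =>
    induction e' with
    | h c d =>
    have hab : a ≠ b := H.ne_of_adj he
    have hcd : c ≠ d := H.ne_of_adj he'
    have hab' := hd a (by simp)
    have hba' := hd b (by simp)
    simp only [Sym2.mem_iff, not_or] at hab' hba'
    have map_adj : ∀ x y, (matching 2).Adj x y → H.Adj (![a, b, c, d] x) (![a, b, c, d] y) := by
      intro x y hxy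
      rw [← SimpleGraph.mem_edgeSet, matching_two_edgeSet] at hxy
      rw [← SimpleGraph.mem_edgeSet, ← Sym2.map_mk]
      rcases hxy with hxy | hxy <;> rw [hxy] <;> simpa
    have inj : Function.Injective ![a, b, c, d] := by
      intro x y hxy
      fin_cases x <;> fin_cases y <;> simp_all [eq_comm]
    by_contra! hne
    refine h ⟨![a, b, c, d], fun {x y} => map_adj x y⟩ inj ?_
    rw [copyEdges_matching_two]
    exact isFreeSet_pair_iff.2 ⟨⟨(hf _ he).2, hne.1⟩, hne.2, (hf _ he').2⟩
  · intro h φ hφ hfree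
    rw [copyEdges_matching_two, isFreeSet_pair_iff] at hfree
    have h01 : (matching 2).Adj 0 1 := by
      rw [← SimpleGraph.mem_edgeSet, matching_two_edgeSet]; simp
    have h23 : (matching 2).Adj 2 3 := by
      rw [← SimpleGraph.mem_edgeSet, matching_two_edgeSet]; simp
    have hd : sym2Disjoint s(φ 0, φ 1) s(φ 2, φ 3) := by
      intro v hv hv'
      simp only [Sym2.mem_iff] at hv hv'
      rcases hv with rfl | rfl <;> rcases hv' with hv' | hv' <;>
        exact absurd (hφ hv') (by decide)
    rcases h _ (φ.map_adj h01) _ (φ.map_adj h23) hd with h | h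
    · exact hfree.1.2 h
    · exact hfree.2.1 h

/-- The fifteen perfect matchings of the complete graph on six vertices. -/
def perfectMatchingSix : Fin 15 → Finset (Sym2 (Fin 6)) :=
  ![{s(0, 1), s(2, 3), s(4, 5)}, {s(0, 1), s(2, 4), s(3, 5)}, {s(0, 1), s(2, 5), s(3, 4)},
   {s(0, 2), s(1, 3), s(4, 5)}, {s(0, 2), s(1, 4), s(3, 5)}, {s(0, 2), s(1, 5), s(3, 4)},
   {s(0, 3), s(1, 2), s(4, 5)}, {s(0, 3), s(1, 4), s(2, 5)}, {s(0, 3), s(1, 5), s(2, 4)},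
   {s(0, 4), s(1, 2), s(3, 5)}, {s(0, 4), s(1, 3), s(2, 5)}, {s(0, 4), s(1, 5), s(2, 3)},
   {s(0, 5), s(1, 2), s(3, 4)}, {s(0, 5), s(1, 3), s(2, 4)}, {s(0, 5), s(1, 4), s(2, 3)}]

theorem card_perfectMatchingSix_mem : ∀ a b : Fin 6, a ≠ b →
    (Finset.univ.filter (s(a, b) ∈ perfectMatchingSix ·)).card = 3 := by
  decide +kernel

theorem card_perfectMatchingSix_mem_mem_le : ∀ e e' : Sym2 (Fin 6), e ≠ e' →
    (Finset.univ.filter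
      (fun i => e ∈ perfectMatchingSix i ∧ e' ∈ perfectMatchingSix i)).card ≤ 1 := by
  decide +kernel

theorem card_mem_perfectMatchingSix_le : ∀ (i : Fin 15) (v : Fin 6),
    ((perfectMatchingSix i).filter (v ∈ ·)).card ≤ 1 := by
  decide +kernel

theorem sym2Disjoint_of_mem_perfectMatchingSix {i : Fin 15} {e e' : Sym2 (Fin 6)}
    (he : e ∈ perfectMatchingSix i) (he' : e' ∈ perfectMatchingSix i) (hne : e ≠ e') :
    sym2Disjoint e e' := fun v hv hv' =>
  hne (Finset.card_le_one.1 (card_mem_perfectMatchingSix_le i v) e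
    (Finset.mem_filter.2 ⟨he, hv⟩) e' (Finset.mem_filter.2 ⟨he', hv'⟩))

/-- Double count the pairs of an edge `e` and a perfect matching through `e`: each edge lies in
three perfect matchings, at most one of which contains `f e`, and each perfect matching has at most
one edge whose image lies outside it. -/
theorem ncard_edgeSet_le_seven (ι : V ↪ Fin 6) (H : SimpleGraph V) (f : Sym2 V → Sym2 V)
    (hf : IsEdgeMap H f) (hfree : NoFreeCopy (matching 2) H f) : H.edgeSet.ncard ≤ 7 := by
  classical
  have := Finite.of_injective ι ι.injective
  have := Fintype.ofFinite V
  have map_inj : Function.Injective (Sym2.map ι) := Sym2.map.injective ι.injective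
  rw [noFreeCopy_matching_two_iff hf] at hfree
  rw [← SimpleGraph.coe_edgeFinset, Set.ncard_coe_finset]
  have through : ∀ e ∈ H.edgeFinset,
      (Finset.univ.filter (Sym2.map ι e ∈ perfectMatchingSix ·)).card = 3 := by
    intro e he
    induction e with
    | h a b =>
    exact card_perfectMatchingSix_mem _ _ (ι.injective.ne (H.ne_of_adj (by simpa using he)))
  have inside : ∀ e ∈ H.edgeFinset, (Finset.univ.filter
      (fun i => Sym2.map ι e ∈ perfectMatchingSix i ∧
        Sym2.map ι (f e) ∈ perfectMatchingSix i)).card ≤ 1 := by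
    intro e he
    exact card_perfectMatchingSix_mem_mem_le _ _
      (map_inj.ne (hf e (by simpa using he)).2.symm)
  have outside : ∀ i ∈ Finset.univ, (H.edgeFinset.filter
      (fun e => Sym2.map ι e ∈ perfectMatchingSix i ∧
        Sym2.map ι (f e) ∉ perfectMatchingSix i)).card ≤ 1 := by
    intro i _
    rw [Finset.card_le_one]
    intro e he e' he'
    simp only [Finset.mem_filter, SimpleGraph.mem_edgeFinset] at he he'
    by_contra hne
    have hd : sym2Disjoint e e' := fun v hv hv' =>
      sym2Disjoint_of_mem_perfectMatchingSix he.2.1 he'.2.1 (map_inj.ne hne) (ι v)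
        (Sym2.mem_map.2 ⟨v, hv, rfl⟩) (Sym2.mem_map.2 ⟨v, hv', rfl⟩)
    rcases hfree e he.1 e' he'.1 hd with h | h
    · exact he.2.2 (h ▸ he'.2.1)
    · exact he'.2.2 (h ▸ he.2.1)
  have split : ∀ e ∈ H.edgeFinset, 3 ≤ 1 + (Finset.univ.filter
      (fun i => Sym2.map ι e ∈ perfectMatchingSix i ∧
        Sym2.map ι (f e) ∉ perfectMatchingSix i)).card := by
    intro e he
    rw [← through e he, ← Finset.card_filter_add_card_filter_not
        (Sym2.map ι (f e) ∈ perfectMatchingSix ·),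
      Finset.filter_filter, Finset.filter_filter]
    exact Nat.add_le_add_right (inside e he) _
  have count := Finset.sum_le_sum split
  have swap := Finset.sum_card_bipartiteAbove_eq_sum_card_bipartiteBelow
    (s := H.edgeFinset) (t := Finset.univ)
    (fun e i => Sym2.map ι e ∈ perfectMatchingSix i ∧
        Sym2.map ι (f e) ∉ perfectMatchingSix i)
  have total := Finset.sum_le_sum outside
  simp only [Finset.bipartiteAbove, Finset.bipartiteBelow] at swap
  rw [Finset.sum_add_distrib, swap] at count
  simp only [Finset.sum_const, smul_eq_mul, mul_one, Finset.card_univ, Fintype.card_fin]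
    at count total
  omega

theorem exists_of_finset {n : ℕ} (E : Finset (Sym2 (Fin n))) (f : Sym2 (Fin n) → Sym2 (Fin n))
    (hE : ∀ e ∈ E, ¬ e.IsDiag) (hf : ∀ e ∈ E, f e ∈ E ∧ f e ≠ e)
    (hdisj : ∀ e ∈ E, ∀ e' ∈ E, (∀ v, v ∈ e → v ∉ e') → f e = e' ∨ f e' = e) :
    ∃ (H : SimpleGraph (Fin n)) (f : Sym2 (Fin n) → Sym2 (Fin n)),
      H.edgeSet.ncard = E.card ∧ IsEdgeMap H f ∧ NoFreeCopy (matching 2) H f := by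
  have edgeSet_eq : (SimpleGraph.fromEdgeSet (E : Set (Sym2 (Fin n)))).edgeSet = E := by
    rw [SimpleGraph.edgeSet_fromEdgeSet]
    exact sdiff_eq_left.2 (Set.disjoint_left.2 fun e he => hE e he)
  have isEdgeMap : IsEdgeMap (SimpleGraph.fromEdgeSet (E : Set (Sym2 (Fin n)))) f := by
    rw [IsEdgeMap, edgeSet_eq]
    exact hf
  refine ⟨SimpleGraph.fromEdgeSet E, f, ?_, isEdgeMap, ?_⟩
  · rw [edgeSet_eq, Set.ncard_coe_finset]
  · rw [noFreeCopy_matching_two_iff isEdgeMap, edgeSet_eq]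
    exact hdisj

/-- The edges of `K₄` on `0, 1, 2, 3`. -/
def completeFourEdges (n : ℕ) [NeZero n] : Finset (Sym2 (Fin n)) :=
  {s(0, 1), s(0, 2), s(0, 3), s(1, 2), s(1, 3), s(2, 3)}

/-- Maps each of the edges `01, 02, 03` of `K₄` to the opposite edge and all other edges
to `e₀`. -/
def oppositeOr {n : ℕ} [NeZero n] (e₀ e : Sym2 (Fin n)) : Sym2 (Fin n) :=
  if e = s(0, 1) then s(2, 3) else if e = s(0, 2) then s(1, 3) else
    if e = s(0, 3) then s(1, 2) else e₀

/-- As `oppositeOr`, with the pendant edge `04` as the default value, and sent to `01`. -/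
def pendantMap {n : ℕ} [NeZero n] (e : Sym2 (Fin n)) : Sym2 (Fin n) :=
  if e = s(0, 4) then s(0, 1) else oppositeOr s(0, 4) e

theorem hNum_four : hNum 4 (matching 2) = 6 := by
  refine IsGreatest.csSup_eq ⟨?_, ?_⟩
  · exact exists_of_finset (completeFourEdges 4) (oppositeOr s(0, 1))
      (by decide +kernel) (by decide +kernel) (by decide +kernel)
  · rintro m ⟨H, f, rfl, -, -⟩
    classical
    rw [← SimpleGraph.coe_edgeFinset, Set.ncard_coe_finset]
    exact H.card_edgeFinset_le_card_choose_two

theorem hNum_five : hNum 5 (matching 2) = 7 := by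
  refine IsGreatest.csSup_eq ⟨?_, ?_⟩
  · exact exists_of_finset (insert s(0, 4) (completeFourEdges 5)) pendantMap
      (by decide +kernel) (by decide +kernel) (by decide +kernel)
  · rintro m ⟨H, f, rfl, hf, hfree⟩
    exact ncard_edgeSet_le_seven Fin.castSuccEmb H f hf hfree

theorem hNum_six : hNum 6 (matching 2) = 7 := by
  refine IsGreatest.csSup_eq ⟨?_, ?_⟩
  · exact exists_of_finset (insert s(0, 4) (completeFourEdges 6)) pendantMap
      (by decide +kernel) (by decide +kernel) (by decide +kernel)
  · rintro m ⟨H, f, rfl, hf, hfree⟩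
    exact ncard_edgeSet_le_seven (Function.Embedding.refl _) H f hf hfree

/-- h(4, 2K₂) = 6, h(5, 2K₂) = 7, h(6, 2K₂) = 7. -/
theorem stmt8 : hNum 4 (matching 2) = 6 ∧ hNum 5 (matching 2) = 7 ∧
    hNum 6 (matching 2) = 7 :=
  ⟨hNum_four, hNum_five, hNum_six⟩
end
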